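/- Assume Π > 0 and Γ > 0 at every (x,y) ∈ U × (ℝⁿ∖{0}). Then the (α,β,γ)-metric F is projectively flat on U, i.e. (∂²F/∂x^k∂y^j)·y^k − ∂F/∂x^j = 0 on U × (ℝⁿ∖{0}) for every j, if and only if at every (x,y) ∈ U × (ℝⁿ∖{0}) and every j: ^αh_{ij}·^αG^i + (α/Π)·[Ψ_s·^βs_{j0} + Ψ_s̄·^γs_{j0}] + (1/(2Γ))·[Γ₁·h_j + Γ₂·h̄_j] = 0, where ^αh_{ij} = a_{ij} − α_iα_j with α_i = ∂α/∂y^i, h_j = b_j − s·α_j, h̄_j = γ_j − s̄·α_j, Γ₁ = [Ψ_ss + (g²−s̄²)J]·R^β + [Ψ_ss̄ − (θ−ss̄)J]·R^γ, Γ₂ = [Ψ_s̄s̄ + (b²−s²)J]·R^γ + [Ψ_ss̄ − (θ−ss̄)J]·R^β, R^β = ^βr_00 − (2α/Π)[Ψ_s·^βs_0 + Ψ_s̄·^γs̄_0], R^γ = ^γr_00 − (2α/Π)[Ψ_s·^βs̄_0 + Ψ_s̄·^γs_0]. -/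

import Mathlib

noncomputable section

open Set

/-- `a^{ij} u_i v_j` : the pairing of two covectors via the inverse matrix. -/
def quadInv {n : ℕ} (a : Matrix (Fin n) (Fin n) ℝ) (u v : Fin n → ℝ) : ℝ :=
  ∑ i, ∑ j, a⁻¹ i j * u i * v j

/-- `α(y) = √(a_{ij} y^i y^j)`. -/
def alph {n : ℕ} (a : Matrix (Fin n) (Fin n) ℝ) (y : Fin n → ℝ) : ℝ :=
  Real.sqrt (∑ i, ∑ j, a i j * y i * y j)

/-- `v_i y^i`. -/
def oneForm {n : ℕ} (v y : Fin n → ℝ) : ℝ := ∑ i, v i * y i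

/-- `s(y) = v_i y^i / α(y)`. -/
def sVar {n : ℕ} (a : Matrix (Fin n) (Fin n) ℝ) (v y : Fin n → ℝ) : ℝ :=
  oneForm v y / alph a y

/-- The (α,β,γ)-metric `F(y) = α·Ψ(s, s̄)`. -/
def Fm {n : ℕ} (a : Matrix (Fin n) (Fin n) ℝ) (bv gv : Fin n → ℝ)
    (Ψ : ℝ → ℝ → ℝ) (y : Fin n → ℝ) : ℝ :=
  alph a y * Ψ (sVar a bv y) (sVar a gv y)

/-- Partial derivative of a function on `ℝⁿ` in the `i`-th coordinate direction. -/
def pd {n : ℕ} (f : (Fin n → ℝ) → ℝ) (y : Fin n → ℝ) (i : Fin n) : ℝ :=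
  fderiv ℝ f y (Pi.single i 1)

/-- Second partial derivative. -/
def pd2 {n : ℕ} (f : (Fin n → ℝ) → ℝ) (y : Fin n → ℝ) (i j : Fin n) : ℝ :=
  pd (fun z => pd f z j) y i

/-- Partial derivative with respect to the first slot (`∂/∂s`). -/
def Ds (Ψ : ℝ → ℝ → ℝ) : ℝ → ℝ → ℝ := fun p q => deriv (fun u => Ψ u q) p

/-- Partial derivative with respect to the second slot (`∂/∂s̄`). -/
def Dt (Ψ : ℝ → ℝ → ℝ) : ℝ → ℝ → ℝ := fun p q => deriv (fun v => Ψ p v) q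

/-- `h_i = v_i − s·α_i`. -/
def hl {n : ℕ} (a : Matrix (Fin n) (Fin n) ℝ) (v y : Fin n → ℝ) (i : Fin n) : ℝ :=
  v i - sVar a v y * pd (alph a) y i

/-- Fundamental tensor `g_{ij} = ½ ∂²(F²)/∂yⁱ∂yʲ`. -/
def fundT {n : ℕ} (F : (Fin n → ℝ) → ℝ) (y : Fin n → ℝ) (i j : Fin n) : ℝ :=
  (1 / 2) * pd2 (fun z => F z ^ 2) y i j

/-- `Π = Ψ − sΨ_s − s̄Ψ_s̄`. -/
def PiF (Ψ : ℝ → ℝ → ℝ) (p q : ℝ) : ℝ := Ψ p q - p * Ds Ψ p q - q * Dt Ψ p q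

/-- `J = (Ψ_ss Ψ_s̄s̄ − Ψ_ss̄²)/Π`. -/
def JF (Ψ : ℝ → ℝ → ℝ) (p q : ℝ) : ℝ :=
  (Ds (Ds Ψ) p q * Dt (Dt Ψ) p q - Dt (Ds Ψ) p q ^ 2) / PiF Ψ p q

/-- `Γ`, with `B = b²`, `G = g²`, `Θ = θ` as real parameters. -/
def GammaF (Ψ : ℝ → ℝ → ℝ) (B G Θ p q : ℝ) : ℝ :=
  PiF Ψ p q + (B - p ^ 2) * Ds (Ds Ψ) p q + (G - q ^ 2) * Dt (Dt Ψ) p q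
    + 2 * (Θ - p * q) * Dt (Ds Ψ) p q
    + ((B - p ^ 2) * (G - q ^ 2) - (Θ - p * q) ^ 2) * JF Ψ p q

/-- `ρ = Ψ(Ψ − sΨ_s − s̄Ψ_s̄)`. -/
def rhoF (Ψ : ℝ → ℝ → ℝ) : ℝ → ℝ → ℝ := fun p q => Ψ p q * PiF Ψ p q

/-- `ρ₀ = ΨΨ_ss + Ψ_s²`. -/
def rho0F (Ψ : ℝ → ℝ → ℝ) : ℝ → ℝ → ℝ := fun p q => Ψ p q * Ds (Ds Ψ) p q + Ds Ψ p q ^ 2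

/-- `ρ̄₀ = ΨΨ_s̄s̄ + Ψ_s̄²`. -/
def rhobar0F (Ψ : ℝ → ℝ → ℝ) : ℝ → ℝ → ℝ := fun p q => Ψ p q * Dt (Dt Ψ) p q + Dt Ψ p q ^ 2

/-- `ρ₃ = ΨΨ_ss̄ + Ψ_sΨ_s̄`. -/
def rho3F (Ψ : ℝ → ℝ → ℝ) : ℝ → ℝ → ℝ :=
  fun p q => Ψ p q * Dt (Ds Ψ) p q + Ds Ψ p q * Dt Ψ p q

/-- `ρ₁ = ΨΨ_s − sρ₀ − s̄ρ₃`. -/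
def rho1F (Ψ : ℝ → ℝ → ℝ) : ℝ → ℝ → ℝ :=
  fun p q => Ψ p q * Ds Ψ p q - p * rho0F Ψ p q - q * rho3F Ψ p q

/-- `ρ̄₁ = ΨΨ_s̄ − s̄ρ̄₀ − sρ₃`. -/
def rhobar1F (Ψ : ℝ → ℝ → ℝ) : ℝ → ℝ → ℝ :=
  fun p q => Ψ p q * Dt Ψ p q - q * rhobar0F Ψ p q - p * rho3F Ψ p q

/-- `ρ₂ = −sρ₁ − s̄ρ̄₁`. -/
def rho2F (Ψ : ℝ → ℝ → ℝ) : ℝ → ℝ → ℝ :=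
  fun p q => -p * rho1F Ψ p q - q * rhobar1F Ψ p q

/-- `π₁ = Ψ_s̄Ψ_ss̄ − Ψ_sΨ_s̄s̄ + sΨJ`. -/
def pi1F (Ψ : ℝ → ℝ → ℝ) (p q : ℝ) : ℝ :=
  Dt Ψ p q * Dt (Ds Ψ) p q - Ds Ψ p q * Dt (Dt Ψ) p q + p * Ψ p q * JF Ψ p q

/-- `π₂ = Ψ_sΨ_ss̄ − Ψ_s̄Ψ_ss + s̄ΨJ`. -/
def pi2F (Ψ : ℝ → ℝ → ℝ) (p q : ℝ) : ℝ :=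
  Ds Ψ p q * Dt (Ds Ψ) p q - Dt Ψ p q * Ds (Ds Ψ) p q + q * Ψ p q * JF Ψ p q


/-- Christoffel symbols `Γ^k_{ij}` of the Riemannian metric `a_{ij}(x)`. -/
def chr {n : ℕ} (a : (Fin n → ℝ) → Matrix (Fin n) (Fin n) ℝ) (x : Fin n → ℝ)
    (k i j : Fin n) : ℝ :=
  (1 / 2) * ∑ l, (a x)⁻¹ k l *
    (pd (fun z => a z j l) x i + pd (fun z => a z i l) x j - pd (fun z => a z i j) x l)

/-- Geodesic coefficients `^αG^i = ½ Γ^i_{jk} y^j y^k` of `α`. -/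
def alphaG {n : ℕ} (a : (Fin n → ℝ) → Matrix (Fin n) (Fin n) ℝ) (x y : Fin n → ℝ)
    (i : Fin n) : ℝ :=
  (1 / 2) * ∑ j, ∑ k, chr a x i j k * y j * y k

/-- Covariant derivative `v_{i|j}` of a 1-form `v` with respect to `α`. -/
def covD {n : ℕ} (a : (Fin n → ℝ) → Matrix (Fin n) (Fin n) ℝ)
    (v : (Fin n → ℝ) → Fin n → ℝ) (x : Fin n → ℝ) (i j : Fin n) : ℝ :=
  pd (fun z => v z i) x j - ∑ k, v x k * chr a x k i j

/-- `r_{ij} = ½(v_{i|j} + v_{j|i})`. -/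
def rSym {n : ℕ} (a : (Fin n → ℝ) → Matrix (Fin n) (Fin n) ℝ)
    (v : (Fin n → ℝ) → Fin n → ℝ) (x : Fin n → ℝ) (i j : Fin n) : ℝ :=
  (1 / 2) * (covD a v x i j + covD a v x j i)

/-- `s_{ij} = ½(v_{i|j} − v_{j|i})`. -/
def sSym {n : ℕ} (a : (Fin n → ℝ) → Matrix (Fin n) (Fin n) ℝ)
    (v : (Fin n → ℝ) → Fin n → ℝ) (x : Fin n → ℝ) (i j : Fin n) : ℝ :=
  (1 / 2) * (covD a v x i j - covD a v x j i)

/-- `r_{00} = r_{ij} y^i y^j`. -/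
def r00 {n : ℕ} (a : (Fin n → ℝ) → Matrix (Fin n) (Fin n) ℝ)
    (v : (Fin n → ℝ) → Fin n → ℝ) (x y : Fin n → ℝ) : ℝ :=
  ∑ i, ∑ j, rSym a v x i j * y i * y j

/-- `s_{j0} = s_{jk} y^k`. -/
def s0low {n : ℕ} (a : (Fin n → ℝ) → Matrix (Fin n) (Fin n) ℝ)
    (v : (Fin n → ℝ) → Fin n → ℝ) (x y : Fin n → ℝ) (j : Fin n) : ℝ :=
  ∑ k, sSym a v x j k * y k

/-- `s^i_0 = a^{ij} s_{j0}`. -/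
def sUp0 {n : ℕ} (a : (Fin n → ℝ) → Matrix (Fin n) (Fin n) ℝ)
    (v : (Fin n → ℝ) → Fin n → ℝ) (x y : Fin n → ℝ) (i : Fin n) : ℝ :=
  ∑ j, (a x)⁻¹ i j * s0low a v x y j

/-- Contraction `w_i · (s of v)^i_0`. -/
def contrS {n : ℕ} (a : (Fin n → ℝ) → Matrix (Fin n) (Fin n) ℝ)
    (v w : (Fin n → ℝ) → Fin n → ℝ) (x y : Fin n → ℝ) : ℝ :=
  ∑ i, w x i * sUp0 a v x y i

/-- Fundamental tensor of `F(x,·)` as a matrix. -/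
def gmatF {n : ℕ} (F : (Fin n → ℝ) → (Fin n → ℝ) → ℝ) (x y : Fin n → ℝ) :
    Matrix (Fin n) (Fin n) ℝ :=
  Matrix.of fun i j => fundT (F x) y i j

/-- Spray coefficients `G^i = ¼ g^{il}(∂g_{jl}/∂x^k + ∂g_{lk}/∂x^j − ∂g_{jk}/∂x^l) y^j y^k`. -/
def sprayF {n : ℕ} (F : (Fin n → ℝ) → (Fin n → ℝ) → ℝ) (x y : Fin n → ℝ) (i : Fin n) : ℝ :=
  (1 / 4) * ∑ l, (gmatF F x y)⁻¹ i l *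
    ∑ j, ∑ k, (pd (fun z => gmatF F z y j l) x k
        + pd (fun z => gmatF F z y l k) x j
        - pd (fun z => gmatF F z y j k) x l) * y j * y k

/-!
Write `Rap L` for the covector `(∂²L/∂xᵏ∂yʲ) yᵏ − ∂L/∂xʲ`. Since `dΠ = −s dΨ_s − s̄ dΨ_s̄`, the
derivatives of the coefficients in `∂F/∂yʲ = Π αⱼ + Ψ_s bⱼ + Ψ_s̄ γⱼ` combine with `h` and `h̄`
only:

  `Rap F = Π Rap α + Ψ_s Rap β + Ψ_s̄ Rap γ + D(Ψ_s) h + D(Ψ_s̄) h̄`,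

where `D` is the derivative in `x` along `y`. Here `Rap α = (2/α) X` with `Xⱼ = ᵅh_{ij} ᵅGⁱ`, and
`Rap β = 2 ᵝs_{j0}`, `Rap γ = 2 ᵞs_{j0}`. As `α Ds = ᵝr₀₀ + 2⟨b, X⟩`, and likewise for `s̄`, the
equation `Rap F = 0` is linear in `X`, with `X` also occurring through its pairings with `b` and
`γ`. Pairing the equation with `b` and `γ` eliminates these. With `H` the Hessian of `Ψ` and `N`
the Gram matrix of `h`, `h̄`, this amounts to inverting `Π + NH`, which the matrix
`M = H + J adj N` achieves: `M (Π + NH) = Γ H = (Π + HN) M`, by Cayley–Hamilton for `NH`. The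
entries of `M (R^β, R^γ)` are `Γ₁` and `Γ₂`.
-/

section RankTwoUpdate

open Matrix

variable {R : Type*} [CommRing R] (H N : Matrix (Fin 2) (Fin 2) R) {J V : R}

lemma add_adjugate_fin_two (A : Matrix (Fin 2) (Fin 2) R) :
    A + A.adjugate = A.trace • (1 : Matrix (Fin 2) (Fin 2) R) := by
  ext i j
  fin_cases i <;> fin_cases j <;> simp [adjugate_fin_two, trace_fin_two, add_comm]

lemma mul_mul_add_det_smul_adjugate :
    H * N * H + H.det • N.adjugate = (N * H).trace • H := by
  calc H * N * H + H.det • N.adjugate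
      = H * (N * H + (N * H).adjugate) := by
        rw [adjugate_mul_distrib, mul_add, ← mul_assoc, ← mul_assoc, mul_adjugate,
          smul_mul_assoc, one_mul]
    _ = (N * H).trace • H := by rw [add_adjugate_fin_two, mul_smul_comm, mul_one]

lemma add_smul_adjugate_mul_smul_one_add (hJ : J * V = H.det) :
    (H + J • N.adjugate) * (V • 1 + N * H) = (V + (N * H).trace + N.det * J) • H := by
  calc (H + J • N.adjugate) * (V • 1 + N * H)
      = V • H + (H * N * H + (J * V) • N.adjugate) + J • (N.adjugate * N) * H := by
        simp only [add_mul, mul_add, smul_mul_assoc, mul_smul_comm, mul_one, mul_assoc]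
        module
    _ = (V + (N * H).trace + N.det * J) • H := by
        rw [hJ, mul_mul_add_det_smul_adjugate, adjugate_mul, smul_mul_assoc, smul_mul_assoc,
          one_mul]
        module

lemma smul_one_add_mul_add_smul_adjugate (hJ : J * V = H.det) :
    (V • 1 + H * N) * (H + J • N.adjugate) = (V + (N * H).trace + N.det * J) • H := by
  calc (V • 1 + H * N) * (H + J • N.adjugate)
      = V • H + (H * N * H + (J * V) • N.adjugate) + J • (H * (N * N.adjugate)) := by
        simp only [add_mul, mul_add, smul_mul_assoc, mul_smul_comm, one_mul, mul_assoc]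
        module
    _ = (V + (N * H).trace + N.det * J) • H := by
        rw [hJ, mul_mul_add_det_smul_adjugate, mul_adjugate, mul_smul_comm, mul_one]
        module

end RankTwoUpdate

section Elimination

open Matrix

variable {𝕜 m κ : Type*} [Field 𝕜] [Fintype m] [Fintype κ] [DecidableEq κ]

lemma add_add_inv_smul_mulVec_eq_zero_iff {L : Matrix κ m 𝕜} {T : Matrix m κ 𝕜}
    {H M : Matrix κ κ 𝕜} {V Γ : 𝕜} (hV : V ≠ 0) (hΓ : Γ ≠ 0)
    (hMH : M * (V • 1 + L * T * H) = Γ • H) (hHM : (V • 1 + H * (L * T)) * M = Γ • H)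
    (X S : m → 𝕜) (r : κ → 𝕜) :
    X + S + V⁻¹ • T *ᵥ H *ᵥ (r + L *ᵥ X) = 0 ↔ X + S + Γ⁻¹ • T *ᵥ M *ᵥ (r - L *ᵥ S) = 0 := by
  have cross (h : V • M *ᵥ (r - L *ᵥ S) = Γ • H *ᵥ (r + L *ᵥ X)) :
      V⁻¹ • T *ᵥ H *ᵥ (r + L *ᵥ X) = Γ⁻¹ • T *ᵥ M *ᵥ (r - L *ᵥ S) := by
    rw [inv_smul_eq_iff₀ hV, smul_comm, eq_inv_smul_iff₀ hΓ, ← mulVec_smul T, ← mulVec_smul T, h]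
  have apply_L {w : κ → 𝕜} {c : 𝕜} (h : X + S + c • T *ᵥ w = 0) :
      L *ᵥ X + L *ᵥ S + c • (L * T) *ᵥ w = 0 := by
    rw [← mulVec_mulVec, ← mulVec_smul, ← mulVec_add, ← mulVec_add, h, mulVec_zero]
  constructor <;> intro h
  · have hR : V • (r - L *ᵥ S) = (V • 1 + L * T * H) *ᵥ (r + L *ᵥ X) := by
      rw [add_mulVec, smul_mulVec, one_mulVec, ← mulVec_mulVec,
        ← smul_inv_smul₀ hV ((L * T) *ᵥ _), ← smul_add]
      congr 1
      linear_combination (norm := module) -apply_L h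
    rwa [← cross]
    rw [← mulVec_smul, hR, mulVec_mulVec, hMH, smul_mulVec]
  · have hR : Γ • (r + L *ᵥ X) = Γ • (r - L *ᵥ S) - (L * T) *ᵥ M *ᵥ (r - L *ᵥ S) := by
      rw [← smul_inv_smul₀ hΓ ((L * T) *ᵥ _), ← smul_sub]
      congr 1
      linear_combination (norm := module) apply_L h
    rwa [cross]
    rw [← mulVec_smul H, hR, mulVec_sub H, mulVec_smul, ← smul_mulVec Γ H, ← hHM, add_mul,
      add_mulVec, smul_mul, one_mul, smul_mulVec, mulVec_mulVec, mulVec_mulVec, mul_assoc,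
      add_sub_cancel_right]

end Elimination
section PartialDerivatives

open Function ContinuousLinearMap

variable {Φ Ψ : ℝ → ℝ → ℝ} {p q : ℝ}

lemma hasFDerivAt_uncurry (h : DifferentiableAt ℝ (uncurry Φ) (p, q)) :
    HasFDerivAt (uncurry Φ) (Ds Φ p q • fst ℝ ℝ ℝ + Dt Φ p q • snd ℝ ℝ ℝ) (p, q) := by
  have hs : Ds Φ p q = fderiv ℝ (uncurry Φ) (p, q) (1, 0) :=
    (h.hasFDerivAt.comp_hasDerivAt (f := fun u => (u, q)) p
      ((hasDerivAt_id p).prodMk (hasDerivAt_const p q))).deriv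
  have ht : Dt Φ p q = fderiv ℝ (uncurry Φ) (p, q) (0, 1) :=
    (h.hasFDerivAt.comp_hasDerivAt (f := fun u => (p, u)) q
      ((hasDerivAt_const q p).prodMk (hasDerivAt_id q))).deriv
  convert h.hasFDerivAt using 1
  ext <;> simp [hs, ht]

lemma Ds_eq_fderiv (h : DifferentiableAt ℝ (uncurry Φ) (p, q)) :
    Ds Φ p q = fderiv ℝ (uncurry Φ) (p, q) (1, 0) := by
  simp [(hasFDerivAt_uncurry h).fderiv]

lemma Dt_eq_fderiv (h : DifferentiableAt ℝ (uncurry Φ) (p, q)) :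
    Dt Φ p q = fderiv ℝ (uncurry Φ) (p, q) (0, 1) := by
  simp [(hasFDerivAt_uncurry h).fderiv]

lemma eventually_differentiableAt_of_contDiffAt {E F : Type*} [NormedAddCommGroup E]
    [NormedSpace ℝ E] [NormedAddCommGroup F] [NormedSpace ℝ F] {f : E → F} {x : E}
    (h : ContDiffAt ℝ 2 f x) : ∀ᶠ z in nhds x, DifferentiableAt ℝ f z :=
  (h.eventually (by simp)).mono fun _ hz => hz.differentiableAt (by simp)

lemma uncurry_Ds_eventuallyEq (h : ContDiffAt ℝ 2 (uncurry Ψ) (p, q)) :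
    uncurry (Ds Ψ) =ᶠ[nhds (p, q)] fun r => fderiv ℝ (uncurry Ψ) r (1, 0) :=
  (eventually_differentiableAt_of_contDiffAt h).mono fun _ => Ds_eq_fderiv

lemma uncurry_Dt_eventuallyEq (h : ContDiffAt ℝ 2 (uncurry Ψ) (p, q)) :
    uncurry (Dt Ψ) =ᶠ[nhds (p, q)] fun r => fderiv ℝ (uncurry Ψ) r (0, 1) :=
  (eventually_differentiableAt_of_contDiffAt h).mono fun _ => Dt_eq_fderiv

lemma differentiableAt_fderiv_uncurry (h : ContDiffAt ℝ 2 (uncurry Ψ) (p, q)) :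
    DifferentiableAt ℝ (fderiv ℝ (uncurry Ψ)) (p, q) :=
  (h.fderiv_right (m := 1) (by norm_num)).differentiableAt (by simp)

lemma differentiableAt_uncurry_Ds (h : ContDiffAt ℝ 2 (uncurry Ψ) (p, q)) :
    DifferentiableAt ℝ (uncurry (Ds Ψ)) (p, q) :=
  ((differentiableAt_fderiv_uncurry h).clm_apply (differentiableAt_const _)).congr_of_eventuallyEq
    (uncurry_Ds_eventuallyEq h)

lemma differentiableAt_uncurry_Dt (h : ContDiffAt ℝ 2 (uncurry Ψ) (p, q)) :
    DifferentiableAt ℝ (uncurry (Dt Ψ)) (p, q) :=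
  ((differentiableAt_fderiv_uncurry h).clm_apply (differentiableAt_const _)).congr_of_eventuallyEq
    (uncurry_Dt_eventuallyEq h)

lemma Ds_Dt_eq_Dt_Ds (h : ContDiffAt ℝ 2 (uncurry Ψ) (p, q)) :
    Ds (Dt Ψ) p q = Dt (Ds Ψ) p q := by
  have hsymm : IsSymmSndFDerivAt ℝ (uncurry Ψ) (p, q) := h.isSymmSndFDerivAt (by simp)
  have hf := differentiableAt_fderiv_uncurry h
  rw [Ds_eq_fderiv (differentiableAt_uncurry_Dt h), Dt_eq_fderiv (differentiableAt_uncurry_Ds h),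
    (uncurry_Ds_eventuallyEq h).fderiv_eq, (uncurry_Dt_eventuallyEq h).fderiv_eq,
    fderiv_clm_apply hf (differentiableAt_const _), fderiv_clm_apply hf (differentiableAt_const _)]
  simpa using hsymm (1, 0) (0, 1)

end PartialDerivatives

section HomogeneousExtension

open Function

variable {E : Type*} [NormedAddCommGroup E] [NormedSpace ℝ E] {Ψ : ℝ → ℝ → ℝ} {z : E}

lemma hasFDerivAt_comp₂ {s t : E → ℝ} {s' t' : E →L[ℝ] ℝ}
    (hs : HasFDerivAt s s' z) (ht : HasFDerivAt t t' z)
    (hΨ : DifferentiableAt ℝ (uncurry Ψ) (s z, t z)) :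
    HasFDerivAt (fun w => Ψ (s w) (t w)) (Ds Ψ (s z) (t z) • s' + Dt Ψ (s z) (t z) • t') z := by
  refine ((hasFDerivAt_uncurry hΨ).comp z (hs.prodMk ht)).congr_fderiv ?_
  ext v
  simp

lemma hasFDerivAt_div {A B : E → ℝ} {A' B' : E →L[ℝ] ℝ}
    (hA : HasFDerivAt A A' z) (hB : HasFDerivAt B B' z) (h0 : A z ≠ 0) :
    HasFDerivAt (fun w => B w / A w) ((A z)⁻¹ • (B' - (B z / A z) • A')) z := by
  simp only [div_eq_mul_inv]
  refine (hB.mul ((hasDerivAt_inv h0).comp_hasFDerivAt z hA)).congr_fderiv ?_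
  ext v
  simp only [neg_smul, smul_neg, comp_apply, add_apply, neg_apply, smul_apply, smul_eq_mul,
    sub_apply]
  field_simp
  ring

lemma hasFDerivAt_mul_comp_div {A B C : E → ℝ} (hA : DifferentiableAt ℝ A z)
    (hB : DifferentiableAt ℝ B z) (hC : DifferentiableAt ℝ C z) (h0 : A z ≠ 0)
    (hΨ : DifferentiableAt ℝ (uncurry Ψ) (B z / A z, C z / A z)) :
    HasFDerivAt (fun w => A w * Ψ (B w / A w) (C w / A w))
      (PiF Ψ (B z / A z) (C z / A z) • fderiv ℝ A z + Ds Ψ (B z / A z) (C z / A z) • fderiv ℝ B z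
        + Dt Ψ (B z / A z) (C z / A z) • fderiv ℝ C z) z := by
  have hs := hasFDerivAt_div hA.hasFDerivAt hB.hasFDerivAt h0
  have ht := hasFDerivAt_div hA.hasFDerivAt hC.hasFDerivAt h0
  refine (hA.hasFDerivAt.mul (hasFDerivAt_comp₂ hs ht hΨ)).congr_fderiv ?_
  ext v
  simp only [smul_add, add_apply, smul_apply, sub_apply, smul_eq_mul, PiF]
  field_simp
  ring

/-- The terms in the derivatives of `s` and `t` themselves cancel, as `Π = Ψ - sΨ_s - tΨ_t` is a
Legendre transform. -/
lemma hasFDerivAt_PiF_comp {s t : E → ℝ} {P' Q' : E →L[ℝ] ℝ} (hs : DifferentiableAt ℝ s z)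
    (ht : DifferentiableAt ℝ t z) (hΨ : DifferentiableAt ℝ (uncurry Ψ) (s z, t z))
    (hP : HasFDerivAt (fun w => Ds Ψ (s w) (t w)) P' z)
    (hQ : HasFDerivAt (fun w => Dt Ψ (s w) (t w)) Q' z) :
    HasFDerivAt (fun w => PiF Ψ (s w) (t w)) (-(s z • P') - t z • Q') z := by
  refine (((hasFDerivAt_comp₂ hs.hasFDerivAt ht.hasFDerivAt hΨ).sub (hs.hasFDerivAt.mul hP)).sub
    (ht.hasFDerivAt.mul hQ)).congr_fderiv ?_
  ext v
  simp only [sub_apply, add_apply, smul_apply, smul_eq_mul, neg_apply]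
  ring

end HomogeneousExtension

section Rapcsak

open Function

variable {n : ℕ}

lemma sum_pd_mul (f : (Fin n → ℝ) → ℝ) (x y : Fin n → ℝ) :
    ∑ k, pd f x k * y k = fderiv ℝ f x y := by
  conv_rhs => rw [pi_eq_sum_univ' y]
  simp [pd, mul_comm]

/-- The Rapcsák expression `(∂²L/∂xᵏ∂yʲ) yᵏ − ∂L/∂xʲ` of a Lagrangian `L x y`; the metric `L` is
projectively flat when it vanishes identically. -/
def rapcsak (L : (Fin n → ℝ) → (Fin n → ℝ) → ℝ) (x y : Fin n → ℝ) (j : Fin n) : ℝ :=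
  (∑ k, pd (fun z => pd (L z) y j) x k * y k) - pd (fun z => L z y) x j

/-- Differentiability of a Lagrangian to the extent needed to compute its Rapcsák expression
at `(x, y)`. -/
structure RapcsakDifferentiable (L : (Fin n → ℝ) → (Fin n → ℝ) → ℝ) (x y : Fin n → ℝ) : Prop where
  eventually_fiber : ∀ᶠ z in nhds x, DifferentiableAt ℝ (L z) y
  base : DifferentiableAt ℝ (fun z => L z y) x
  base_pd (j : Fin n) : DifferentiableAt ℝ (fun z => pd (L z) y j) x

variable {A B C : (Fin n → ℝ) → (Fin n → ℝ) → ℝ} {Ψ : ℝ → ℝ → ℝ} {x y : Fin n → ℝ}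

lemma pd_mul_comp_div_eventuallyEq (hA : RapcsakDifferentiable A x y)
    (hB : RapcsakDifferentiable B x y) (hC : RapcsakDifferentiable C x y) (h0 : A x y ≠ 0)
    (hΨ : ContDiffAt ℝ 2 (uncurry Ψ) (B x y / A x y, C x y / A x y)) (j : Fin n) :
    (fun z => pd (fun w => A z w * Ψ (B z w / A z w) (C z w / A z w)) y j) =ᶠ[nhds x]
      fun z => PiF Ψ (B z y / A z y) (C z y / A z y) * pd (A z) y j
        + Ds Ψ (B z y / A z y) (C z y / A z y) * pd (B z) y j
        + Dt Ψ (B z y / A z y) (C z y / A z y) * pd (C z) y j := by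
  have hs : ContinuousAt (fun z => B z y / A z y) x :=
    hB.base.continuousAt.div hA.base.continuousAt h0
  have ht : ContinuousAt (fun z => C z y / A z y) x :=
    hC.base.continuousAt.div hA.base.continuousAt h0
  filter_upwards [hA.eventually_fiber, hB.eventually_fiber, hC.eventually_fiber,
    hA.base.continuousAt.eventually_ne h0,
    (hs.prodMk ht).eventually (eventually_differentiableAt_of_contDiffAt hΨ)]
    with z hAz hBz hCz h0z hΨz
  simp [pd, (hasFDerivAt_mul_comp_div hAz hBz hCz h0z hΨz).fderiv]

lemma rapcsak_mul_comp_div (hA : RapcsakDifferentiable A x y) (hB : RapcsakDifferentiable B x y)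
    (hC : RapcsakDifferentiable C x y) (h0 : A x y ≠ 0) {s t : ℝ} (hs : s = B x y / A x y)
    (ht : t = C x y / A x y) (hΨ : ContDiffAt ℝ 2 (uncurry Ψ) (s, t)) {σ τ : ℝ}
    (hσ : σ = fderiv ℝ (fun z => B z y / A z y) x y)
    (hτ : τ = fderiv ℝ (fun z => C z y / A z y) x y) (j : Fin n) :
    rapcsak (fun z w => A z w * Ψ (B z w / A z w) (C z w / A z w)) x y j
      = PiF Ψ s t * rapcsak A x y j + Ds Ψ s t * rapcsak B x y j + Dt Ψ s t * rapcsak C x y j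
        + (Ds (Ds Ψ) s t * σ + Dt (Ds Ψ) s t * τ) * (pd (B x) y j - s * pd (A x) y j)
        + (Dt (Ds Ψ) s t * σ + Dt (Dt Ψ) s t * τ) * (pd (C x) y j - t * pd (A x) y j) := by
  subst hs ht hσ hτ
  have hs : DifferentiableAt ℝ (fun z => B z y / A z y) x :=
    (hasFDerivAt_div hA.base.hasFDerivAt hB.base.hasFDerivAt h0).differentiableAt
  have ht : DifferentiableAt ℝ (fun z => C z y / A z y) x :=
    (hasFDerivAt_div hA.base.hasFDerivAt hC.base.hasFDerivAt h0).differentiableAt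
  have hΨ₁ : DifferentiableAt ℝ (uncurry Ψ) _ := hΨ.differentiableAt (by simp)
  have hP := hasFDerivAt_comp₂ hs.hasFDerivAt ht.hasFDerivAt (differentiableAt_uncurry_Ds hΨ)
  have hQ := hasFDerivAt_comp₂ hs.hasFDerivAt ht.hasFDerivAt (differentiableAt_uncurry_Dt hΨ)
  have hPi := hasFDerivAt_PiF_comp hs ht hΨ₁ hP hQ
  have hfiber := ((hPi.mul (hA.base_pd j).hasFDerivAt).add
    (hP.mul (hB.base_pd j).hasFDerivAt)).add (hQ.mul (hC.base_pd j).hasFDerivAt)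
  have hbase := hasFDerivAt_mul_comp_div hA.base hB.base hC.base h0 hΨ₁
  simp only [rapcsak, sum_pd_mul]
  rw [(hfiber.congr_of_eventuallyEq (pd_mul_comp_div_eventuallyEq hA hB hC h0 hΨ j)).fderiv]
  simp only [pd, hbase.fderiv]
  simp only [Ds_Dt_eq_Dt_Ds hΨ, add_apply, smul_apply, smul_eq_mul, sub_apply, neg_apply]
  ring

end Rapcsak

section Norm

open Matrix

variable {n : ℕ} {a : Matrix (Fin n) (Fin n) ℝ} {y : Fin n → ℝ}

lemma alph_eq_sqrt (a : Matrix (Fin n) (Fin n) ℝ) (y : Fin n → ℝ) :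
    alph a y = √(y ⬝ᵥ a *ᵥ y) := by
  simp only [alph, dotProduct, mulVec, Finset.mul_sum]
  congr! 3
  ring

lemma alph_pos (ha : a.PosDef) (hy : y ≠ 0) : 0 < alph a y := by
  rw [alph_eq_sqrt, Real.sqrt_pos]
  simpa using ha.dotProduct_mulVec_pos hy

lemma dotProduct_mulVec_self_pos (h0 : alph a y ≠ 0) : 0 < y ⬝ᵥ a *ᵥ y := by
  rwa [alph_eq_sqrt, Real.sqrt_ne_zero'] at h0

lemma sq_alph (h0 : alph a y ≠ 0) : alph a y ^ 2 = y ⬝ᵥ a *ᵥ y := by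
  rw [alph_eq_sqrt, Real.sq_sqrt (dotProduct_mulVec_self_pos h0).le]

lemma hasFDerivAt_dotProduct_mulVec_self (ha : a.IsSymm) (y : Fin n → ℝ) :
    HasFDerivAt (fun w => w ⬝ᵥ a *ᵥ w)
      ((2 : ℝ) • ∑ i, (a *ᵥ y) i • (ContinuousLinearMap.proj i : (Fin n → ℝ) →L[ℝ] ℝ)) y := by
  have hmul (i : Fin n) : HasFDerivAt (fun w => w i * (a *ᵥ w) i)
      (y i • (ContinuousLinearMap.proj i ∘L (mulVecLin a).toContinuousLinearMap)
        + (a *ᵥ y) i • ContinuousLinearMap.proj i) y :=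
    (hasFDerivAt_apply i y).mul
      (ContinuousLinearMap.proj i ∘L (mulVecLin a).toContinuousLinearMap).hasFDerivAt
  refine (HasFDerivAt.fun_sum fun i _ => hmul i).congr_fderiv ?_
  ext v
  have hsymm : y ⬝ᵥ a *ᵥ v = (a *ᵥ y) ⬝ᵥ v := by
    rw [dotProduct_mulVec, ← mulVec_transpose, ha.eq]
  simp only [dotProduct] at hsymm
  simp only [Finset.sum_add_distrib, _root_.add_apply, _root_.sum_apply, _root_.smul_apply,
    ContinuousLinearMap.comp_apply, LinearMap.coe_toContinuousLinearMap', mulVecBilin_apply,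
    ContinuousLinearMap.proj_apply, smul_eq_mul, hsymm]
  ring

lemma hasFDerivAt_alph (ha : a.IsSymm) (h0 : alph a y ≠ 0) :
    HasFDerivAt (alph a)
      ((alph a y)⁻¹ • ∑ i, (a *ᵥ y) i • (ContinuousLinearMap.proj i : (Fin n → ℝ) →L[ℝ] ℝ)) y := by
  rw [show alph a = fun w => √(w ⬝ᵥ a *ᵥ w) from funext (alph_eq_sqrt a)]
  refine ((hasFDerivAt_dotProduct_mulVec_self ha y).sqrt
    (dotProduct_mulVec_self_pos h0).ne').congr_fderiv ?_
  rw [smul_smul]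
  congr 1
  field_simp

lemma pd_alph (ha : a.IsSymm) (h0 : alph a y ≠ 0) : pd (alph a) y = (alph a y)⁻¹ • a *ᵥ y := by
  ext j
  simp [pd, (hasFDerivAt_alph ha h0).fderiv, Pi.single_apply]

lemma quadInv_eq (a : Matrix (Fin n) (Fin n) ℝ) (u v : Fin n → ℝ) :
    quadInv a u v = u ⬝ᵥ a⁻¹ *ᵥ v := by
  simp only [quadInv, dotProduct, mulVec, Finset.mul_sum]
  congr! 2
  ring

lemma quadInv_comm (ha : a.IsSymm) (u v : Fin n → ℝ) : quadInv a u v = quadInv a v u := by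
  rw [quadInv_eq, quadInv_eq, dotProduct_mulVec, ← mulVec_transpose, transpose_nonsing_inv, ha.eq,
    dotProduct_comm]

lemma quadInv_mulVec (hdet : IsUnit a.det) (u w : Fin n → ℝ) : quadInv a u (a *ᵥ w) = u ⬝ᵥ w := by
  rw [quadInv_eq, mulVec_mulVec, nonsing_inv_mul a hdet, one_mulVec]

lemma quadInv_pd_alph (ha : a.IsSymm) (hdet : IsUnit a.det) (h0 : alph a y ≠ 0) (v : Fin n → ℝ) :
    quadInv a v (pd (alph a) y) = sVar a v y := by
  rw [pd_alph ha h0, ← mulVec_smul, quadInv_mulVec hdet, dotProduct_smul, smul_eq_mul, sVar,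
    div_eq_inv_mul, oneForm, dotProduct]

lemma hl_eq (a : Matrix (Fin n) (Fin n) ℝ) (v y : Fin n → ℝ) :
    hl a v y = v - sVar a v y • pd (alph a) y := rfl

lemma quadInv_hl (ha : a.IsSymm) (hdet : IsUnit a.det) (h0 : alph a y ≠ 0) (u v : Fin n → ℝ) :
    quadInv a u (hl a v y) = quadInv a u v - sVar a u y * sVar a v y := by
  rw [← quadInv_pd_alph ha hdet h0 u]
  simp only [quadInv_eq, hl_eq, mulVec_sub, mulVec_smul, dotProduct_sub, dotProduct_smul,
    smul_eq_mul, mul_comm]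

lemma sq_oneForm_le (ha : a.PosDef) (v y : Fin n → ℝ) :
    oneForm v y ^ 2 ≤ quadInv a v v * (y ⬝ᵥ a *ᵥ y) := by
  have hnonneg (w : Fin n → ℝ) : 0 ≤ toBilin' a w w := by
    simpa [toBilin'_apply'] using ha.posSemidef.dotProduct_mulVec_nonneg w
  have hinv : a *ᵥ a⁻¹ *ᵥ v = v := by
    rw [mulVec_mulVec, mul_nonsing_inv a (a.isUnit_iff_isUnit_det.1 ha.isUnit), one_mulVec]
  have hsymm : (a⁻¹ *ᵥ v) ⬝ᵥ a *ᵥ y = oneForm v y := by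
    rw [dotProduct_mulVec, ← mulVec_transpose, ← conjTranspose_eq_transpose_of_trivial,
      ha.isHermitian.eq, hinv]
    rfl
  have := LinearMap.BilinForm.apply_mul_apply_le_of_forall_zero_le _ hnonneg (a⁻¹ *ᵥ v) y
  simp only [toBilin'_apply', hinv, hsymm] at this
  rwa [dotProduct_comm y, dotProduct_comm _ v, ← quadInv_eq, show v ⬝ᵥ y = oneForm v y from rfl,
    ← sq] at this

lemma abs_sVar_le (ha : a.PosDef) (hy : y ≠ 0) (v : Fin n → ℝ) :
    |sVar a v y| ≤ √(quadInv a v v) := by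
  have h0 := alph_pos ha hy
  refine Real.abs_le_sqrt ?_
  rw [sVar, div_pow, div_le_iff₀ (by positivity), sq_alph h0.ne']
  exact sq_oneForm_le ha v y

end Norm

section GeodesicCoefficients

open Matrix

variable {n : ℕ} {a : (Fin n → ℝ) → Matrix (Fin n) (Fin n) ℝ} {v : (Fin n → ℝ) → Fin n → ℝ}
  {x y : Fin n → ℝ}

lemma hasFDerivAt_mulVec_apply (ha : ∀ i j, DifferentiableAt ℝ (fun z => a z i j) x)
    (y : Fin n → ℝ) (j : Fin n) :
    HasFDerivAt (fun z => (a z *ᵥ y) j) (∑ k, y k • fderiv ℝ (fun z => a z j k) x) x := by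
  simp only [mulVec, dotProduct]
  exact .fun_sum fun k _ => (ha j k).hasFDerivAt.mul_const (y k)

lemma hasFDerivAt_dotProduct_mulVec (ha : ∀ i j, DifferentiableAt ℝ (fun z => a z i j) x)
    (u y : Fin n → ℝ) :
    HasFDerivAt (fun z => u ⬝ᵥ a z *ᵥ y)
      (∑ i, u i • ∑ k, y k • fderiv ℝ (fun z => a z i k) x) x :=
  .fun_sum fun i _ => (hasFDerivAt_mulVec_apply ha y i).const_mul (u i)

lemma hasFDerivAt_oneForm (hv : ∀ i, DifferentiableAt ℝ (fun z => v z i) x) (y : Fin n → ℝ) :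
    HasFDerivAt (fun z => oneForm (v z) y) (∑ i, y i • fderiv ℝ (fun z => v z i) x) x :=
  .fun_sum fun i _ => (hv i).hasFDerivAt.mul_const (y i)

lemma pd_oneForm (v y : Fin n → ℝ) (j : Fin n) : pd (oneForm v) y j = v j := by
  have h : HasFDerivAt (oneForm v) (∑ i, v i • (ContinuousLinearMap.proj i : _ →L[ℝ] ℝ)) y :=
    .fun_sum fun i _ => (hasFDerivAt_apply i y).const_mul (v i)
  simp [pd, h.fderiv, Pi.single_apply]

lemma eventually_alph_ne_zero (ha : ∀ i j, DifferentiableAt ℝ (fun z => a z i j) x)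
    (h0 : alph (a x) y ≠ 0) : ∀ᶠ z in nhds x, alph (a z) y ≠ 0 := by
  simp only [alph_eq_sqrt]
  refine ContinuousAt.eventually_ne ?_ (by rwa [← alph_eq_sqrt])
  exact (hasFDerivAt_dotProduct_mulVec ha y y).continuousAt.sqrt

lemma hasFDerivAt_alph_base (ha : ∀ i j, DifferentiableAt ℝ (fun z => a z i j) x)
    (h0 : alph (a x) y ≠ 0) :
    HasFDerivAt (fun z => alph (a z) y)
      ((2 * alph (a x) y)⁻¹ • fderiv ℝ (fun z => y ⬝ᵥ a z *ᵥ y) x) x := by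
  simp only [alph_eq_sqrt, ← one_div]
  exact (hasFDerivAt_dotProduct_mulVec ha y y).differentiableAt.hasFDerivAt.sqrt
    (dotProduct_mulVec_self_pos h0).ne'

lemma pd_apply_symm (hs : ∀ᶠ z in nhds x, (a z).IsSymm) (i j : Fin n) :
    pd (fun z => a z i j) x = pd (fun z => a z j i) x := by
  ext l
  have hij : (fun z => a z i j) =ᶠ[nhds x] fun z => a z j i := hs.mono fun z hz => hz.apply j i
  rw [pd, pd, hij.fderiv_eq]

lemma chr_comm (hs : ∀ᶠ z in nhds x, (a z).IsSymm) (k i j : Fin n) :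
    chr a x k i j = chr a x k j i := by
  simp only [chr, pd_apply_symm hs i j]
  congr! 3
  ring

lemma mulVec_chr (hdet : IsUnit (a x).det) (i j l : Fin n) :
    (a x *ᵥ fun k => chr a x k i j) l = (1 / 2) *
      (pd (fun z => a z j l) x i + pd (fun z => a z i l) x j - pd (fun z => a z i j) x l) := by
  have hchr : (fun k => chr a x k i j) = (a x)⁻¹ *ᵥ ((1 / 2 : ℝ) • fun l =>
      pd (fun z => a z j l) x i + pd (fun z => a z i l) x j - pd (fun z => a z i j) x l) := by
    ext k
    rw [mulVec_smul]
    rfl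
  rw [hchr, mulVec_mulVec, mul_nonsing_inv _ hdet, one_mulVec]
  rfl

lemma alphaG_eq (a : (Fin n → ℝ) → Matrix (Fin n) (Fin n) ℝ) (x y : Fin n → ℝ) :
    alphaG a x y = (1 / 2 : ℝ) • ∑ j, ∑ k, (y j * y k) • fun i => chr a x i j k := by
  ext i
  simp [alphaG, Finset.sum_apply, mul_comm, mul_left_comm]

lemma mulVec_alphaG (ha : ∀ i j, DifferentiableAt ℝ (fun z => a z i j) x)
    (hs : ∀ᶠ z in nhds x, (a z).IsSymm) (hdet : IsUnit (a x).det) (y : Fin n → ℝ) (l : Fin n) :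
    (a x *ᵥ alphaG a x y) l = (1 / 2) * fderiv ℝ (fun z => (a z *ᵥ y) l) x y
      - (1 / 4) * pd (fun z => y ⬝ᵥ a z *ᵥ y) x l := by
  have hD : fderiv ℝ (fun z => (a z *ᵥ y) l) x y =
      ∑ j, ∑ k, y j * y k * pd (fun z => a z j l) x k := by
    rw [(hasFDerivAt_mulVec_apply ha y l).fderiv]
    simp [← sum_pd_mul, Finset.mul_sum, pd_apply_symm hs l, mul_comm, mul_assoc]
  have hD' : fderiv ℝ (fun z => (a z *ᵥ y) l) x y =
      ∑ j, ∑ k, y j * y k * pd (fun z => a z k l) x j := by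
    rw [hD, Finset.sum_comm]
    simp only [mul_comm]
  have hQ : pd (fun z => y ⬝ᵥ a z *ᵥ y) x l =
      ∑ j, ∑ k, y j * y k * pd (fun z => a z j k) x l := by
    rw [pd, (hasFDerivAt_dotProduct_mulVec ha y y).fderiv]
    simp [pd, Finset.mul_sum, mul_assoc]
  have hsum : (a x *ᵥ alphaG a x y) l = (1 / 2) * ∑ j, ∑ k, y j * y k * ((1 / 2) *
      (pd (fun z => a z k l) x j + pd (fun z => a z j l) x k - pd (fun z => a z j k) x l)) := by
    simp [alphaG_eq, mulVec_smul, mulVec_sum, mulVec_chr hdet, Finset.sum_apply]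
  rw [hsum, hQ]
  simp only [mul_sub, mul_add, Finset.sum_sub_distrib, Finset.sum_add_distrib,
    mul_left_comm _ (1 / 2 : ℝ), ← Finset.mul_sum, ← hD, ← hD']
  ring

lemma dotProduct_mulVec_alphaG (ha : ∀ i j, DifferentiableAt ℝ (fun z => a z i j) x)
    (hs : ∀ᶠ z in nhds x, (a z).IsSymm) (hdet : IsUnit (a x).det) (y : Fin n → ℝ) :
    y ⬝ᵥ a x *ᵥ alphaG a x y = (1 / 4) * fderiv ℝ (fun z => y ⬝ᵥ a z *ᵥ y) x y := by
  have hQ : fderiv ℝ (fun z => y ⬝ᵥ a z *ᵥ y) x y =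
      ∑ l, y l * fderiv ℝ (fun z => (a z *ᵥ y) l) x y := by
    simp [(hasFDerivAt_dotProduct_mulVec ha y y).fderiv, (hasFDerivAt_mulVec_apply ha y _).fderiv]
  have hl (l : Fin n) : y l * (a x *ᵥ alphaG a x y) l =
      (1 / 2) * (y l * fderiv ℝ (fun z => (a z *ᵥ y) l) x y)
        - (1 / 4) * (pd (fun z => y ⬝ᵥ a z *ᵥ y) x l * y l) := by
    rw [mulVec_alphaG ha hs hdet]
    ring
  rw [dotProduct, Finset.sum_congr rfl fun l _ => hl l, Finset.sum_sub_distrib, ← Finset.mul_sum,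
    ← Finset.mul_sum, ← hQ, sum_pd_mul]
  ring

lemma fderiv_alph_base (ha : ∀ i j, DifferentiableAt ℝ (fun z => a z i j) x)
    (hs : ∀ᶠ z in nhds x, (a z).IsSymm) (hdet : IsUnit (a x).det) (h0 : alph (a x) y ≠ 0) :
    fderiv ℝ (fun z => alph (a z) y) x y = 2 * (pd (alph (a x)) y ⬝ᵥ alphaG a x y) := by
  have hG : (a x *ᵥ y) ⬝ᵥ alphaG a x y = (1 / 4) * fderiv ℝ (fun z => y ⬝ᵥ a z *ᵥ y) x y := by
    rw [← dotProduct_mulVec_alphaG ha hs hdet, dotProduct_mulVec, ← mulVec_transpose,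
      hs.self_of_nhds.eq]
  rw [pd_alph hs.self_of_nhds h0, smul_dotProduct, hG, (hasFDerivAt_alph_base ha h0).fderiv]
  simp only [mul_inv, _root_.smul_apply, smul_eq_mul]
  ring

/-- The covector `ᵅh_{ij} ᵅGⁱ`: the geodesic coefficients of `α`, with their index lowered, after
projection along `y`. -/
def angularG (a : (Fin n → ℝ) → Matrix (Fin n) (Fin n) ℝ) (x y : Fin n → ℝ) (j : Fin n) : ℝ :=
  ∑ i, (a x i j - pd (alph (a x)) y i * pd (alph (a x)) y j) * alphaG a x y i

lemma angularG_eq (hs : (a x).IsSymm) (y : Fin n → ℝ) :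
    angularG a x y =
      a x *ᵥ alphaG a x y - (pd (alph (a x)) y ⬝ᵥ alphaG a x y) • pd (alph (a x)) y := by
  ext j
  simp [angularG, mulVec, dotProduct, sub_mul, Finset.sum_mul, hs.apply, mul_right_comm]

lemma hasFDerivAt_pd_alph (ha : ∀ i j, DifferentiableAt ℝ (fun z => a z i j) x)
    (hs : ∀ᶠ z in nhds x, (a z).IsSymm) (h0 : alph (a x) y ≠ 0) (j : Fin n) :
    HasFDerivAt (fun z => pd (alph (a z)) y j)
      ((alph (a x) y)⁻¹ • (fderiv ℝ (fun z => (a z *ᵥ y) j) x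
        - pd (alph (a x)) y j • fderiv ℝ (fun z => alph (a z) y) x)) x := by
  have hpd : (fun z => pd (alph (a z)) y j) =ᶠ[nhds x] fun z => (a z *ᵥ y) j / alph (a z) y := by
    filter_upwards [hs, eventually_alph_ne_zero ha h0] with z hz h0z
    rw [pd_alph hz h0z, Pi.smul_apply, smul_eq_mul, div_eq_inv_mul]
  rw [hpd.eq_of_nhds]
  exact (hasFDerivAt_div (hasFDerivAt_alph_base ha h0).differentiableAt.hasFDerivAt
    (hasFDerivAt_mulVec_apply ha y j).differentiableAt.hasFDerivAt h0).congr_of_eventuallyEq hpd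

lemma rapcsakDifferentiable_alph (ha : ∀ i j, DifferentiableAt ℝ (fun z => a z i j) x)
    (hs : ∀ᶠ z in nhds x, (a z).IsSymm) (h0 : alph (a x) y ≠ 0) :
    RapcsakDifferentiable (fun z => alph (a z)) x y where
  eventually_fiber := by
    filter_upwards [hs, eventually_alph_ne_zero ha h0] with z hz h0z
    exact (hasFDerivAt_alph hz h0z).differentiableAt
  base := (hasFDerivAt_alph_base ha h0).differentiableAt
  base_pd j := (hasFDerivAt_pd_alph ha hs h0 j).differentiableAt

lemma rapcsak_alph (ha : ∀ i j, DifferentiableAt ℝ (fun z => a z i j) x)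
    (hs : ∀ᶠ z in nhds x, (a z).IsSymm) (hdet : IsUnit (a x).det) (h0 : alph (a x) y ≠ 0)
    (j : Fin n) :
    rapcsak (fun z => alph (a z)) x y j = 2 / alph (a x) y * angularG a x y j := by
  rw [rapcsak, sum_pd_mul, (hasFDerivAt_pd_alph ha hs h0 j).fderiv]
  have hbase : pd (fun z => alph (a z) y) x j =
      (2 * alph (a x) y)⁻¹ * pd (fun z => y ⬝ᵥ a z *ᵥ y) x j := by
    simp [pd, (hasFDerivAt_alph_base ha h0).fderiv]
  simp only [_root_.smul_apply, _root_.sub_apply, smul_eq_mul, hbase,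
    fderiv_alph_base ha hs hdet h0, angularG_eq hs.self_of_nhds, Pi.sub_apply, Pi.smul_apply,
    mulVec_alphaG ha hs hdet]
  field_simp
  ring

lemma rapcsakDifferentiable_oneForm (hv : ∀ i, DifferentiableAt ℝ (fun z => v z i) x) :
    RapcsakDifferentiable (fun z => oneForm (v z)) x y where
  eventually_fiber := .of_forall fun z => by unfold oneForm; fun_prop
  base := (hasFDerivAt_oneForm hv y).differentiableAt
  base_pd j := by
    simpa only [pd_oneForm] using hv j

lemma rapcsak_oneForm (hs : ∀ᶠ z in nhds x, (a z).IsSymm)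
    (hv : ∀ i, DifferentiableAt ℝ (fun z => v z i) x) (y : Fin n → ℝ) (j : Fin n) :
    rapcsak (fun z => oneForm (v z)) x y j = 2 * s0low a v x y j := by
  have hpd : pd (fun z => oneForm (v z) y) x j = ∑ k, pd (fun z => v z k) x j * y k := by
    simp [pd, (hasFDerivAt_oneForm hv y).fderiv, mul_comm]
  simp only [rapcsak, pd_oneForm, hpd, s0low, sSym, covD, chr_comm hs _ j, Finset.mul_sum,
    ← Finset.sum_sub_distrib]
  congr! 1
  ring

lemma two_mul_dotProduct_alphaG (u : Fin n → ℝ) :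
    2 * (u ⬝ᵥ alphaG a x y) = ∑ i, ∑ j, (u ⬝ᵥ fun k => chr a x k i j) * y i * y j := by
  simp only [alphaG_eq, dotProduct_smul, dotProduct_sum, smul_eq_mul]
  simp only [mul_comm (y _ * y _), mul_assoc, one_div, mul_inv_cancel_left₀ (two_ne_zero' ℝ)]

lemma fderiv_oneForm_base (hv : ∀ i, DifferentiableAt ℝ (fun z => v z i) x) (y : Fin n → ℝ) :
    fderiv ℝ (fun z => oneForm (v z) y) x y = r00 a v x y + 2 * (v x ⬝ᵥ alphaG a x y) := by
  have hcov : r00 a v x y = ∑ i, ∑ j, covD a v x i j * y i * y j := by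
    have hswap : ∑ i, ∑ j, covD a v x j i * y i * y j = ∑ i, ∑ j, covD a v x i j * y i * y j := by
      rw [Finset.sum_comm]
      simp only [mul_right_comm]
    simp only [r00, rSym, mul_assoc, add_mul, Finset.sum_add_distrib, ← Finset.mul_sum] at hswap ⊢
    rw [hswap]
    ring
  have hpd : fderiv ℝ (fun z => oneForm (v z) y) x y =
      ∑ i, ∑ j, pd (fun z => v z i) x j * y i * y j := by
    simp [(hasFDerivAt_oneForm hv y).fderiv, ← sum_pd_mul, Finset.mul_sum, mul_comm, mul_left_comm]
  rw [two_mul_dotProduct_alphaG, hcov, hpd]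
  simp only [covD, sub_mul, Finset.sum_sub_distrib, dotProduct, sub_add_cancel]

lemma fderiv_sVar_base (ha : ∀ i j, DifferentiableAt ℝ (fun z => a z i j) x)
    (hs : ∀ᶠ z in nhds x, (a z).IsSymm) (hdet : IsUnit (a x).det) (h0 : alph (a x) y ≠ 0)
    (hv : ∀ i, DifferentiableAt ℝ (fun z => v z i) x) :
    fderiv ℝ (fun z => oneForm (v z) y / alph (a z) y) x y =
      (r00 a v x y + 2 * quadInv (a x) (v x) (angularG a x y)) / alph (a x) y := by
  have hX : quadInv (a x) (v x) (angularG a x y) = v x ⬝ᵥ alphaG a x y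
      - sVar (a x) (v x) y * (pd (alph (a x)) y ⬝ᵥ alphaG a x y) := by
    rw [← quadInv_mulVec hdet, ← quadInv_pd_alph hs.self_of_nhds hdet h0]
    simp only [angularG_eq hs.self_of_nhds, quadInv_eq, mulVec_sub, mulVec_smul, dotProduct_sub,
      dotProduct_smul, smul_eq_mul, mul_comm]
  rw [(hasFDerivAt_div (hasFDerivAt_alph_base ha h0).differentiableAt.hasFDerivAt
    (hasFDerivAt_oneForm hv y).differentiableAt.hasFDerivAt h0).fderiv, hX]
  simp only [_root_.smul_apply, _root_.sub_apply, smul_eq_mul,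
    fderiv_alph_base ha hs hdet h0, fderiv_oneForm_base hv (a := a), sVar]
  ring

lemma contrS_eq (a : (Fin n → ℝ) → Matrix (Fin n) (Fin n) ℝ)
    (v w : (Fin n → ℝ) → Fin n → ℝ) (x y : Fin n → ℝ) :
    contrS a v w x y = quadInv (a x) (w x) (s0low a v x y) := by
  rw [quadInv_eq]
  rfl

end GeodesicCoefficients

section Metric

open Matrix Function

variable {n : ℕ} {a : (Fin n → ℝ) → Matrix (Fin n) (Fin n) ℝ} {bv gv : (Fin n → ℝ) → Fin n → ℝ}
  {Ψ : ℝ → ℝ → ℝ} {x y : Fin n → ℝ}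

/-- The Hessian of `Ψ`, the mixed entries both being `∂/∂s̄ ∂/∂s`. -/
def hessianΨ (Ψ : ℝ → ℝ → ℝ) (p q : ℝ) : Matrix (Fin 2) (Fin 2) ℝ :=
  !![Ds (Ds Ψ) p q, Dt (Ds Ψ) p q; Dt (Ds Ψ) p q, Dt (Dt Ψ) p q]

/-- The Gram matrix of `h` and `h̄` with respect to `a^{ij}`, with `B = b²`, `G = g²`, `Θ = θ` as
real parameters. -/
def transverseGram (B G Θ p q : ℝ) : Matrix (Fin 2) (Fin 2) ℝ :=
  !![B - p ^ 2, Θ - p * q; Θ - p * q, G - q ^ 2]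

/-- The `n × 2` matrix with columns `h` and `h̄`, the components of `β` and `γ` transverse
to `y`. -/
def transverseFrame (a : Matrix (Fin n) (Fin n) ℝ) (b g y : Fin n → ℝ) : Matrix (Fin n) (Fin 2) ℝ :=
  (of ![hl a b y, hl a g y])ᵀ

/-- The `2 × n` matrix of the map `w ↦ (a^{ij} b_i w_j, a^{ij} γ_i w_j)`. -/
def pairingMatrix (a : Matrix (Fin n) (Fin n) ℝ) (b g : Fin n → ℝ) : Matrix (Fin 2) (Fin n) ℝ :=
  of ![b, g] * a⁻¹

lemma transverseFrame_mulVec (a : Matrix (Fin n) (Fin n) ℝ) (b g y : Fin n → ℝ) (c : Fin 2 → ℝ) :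
    transverseFrame a b g y *ᵥ c = c 0 • hl a b y + c 1 • hl a g y := by
  ext i
  simp [transverseFrame, mulVec, dotProduct, Fin.sum_univ_two, mul_comm]

lemma pairingMatrix_mulVec (a : Matrix (Fin n) (Fin n) ℝ) (b g w : Fin n → ℝ) :
    pairingMatrix a b g *ᵥ w = ![quadInv a b w, quadInv a g w] := by
  rw [pairingMatrix, ← mulVec_mulVec, quadInv_eq, quadInv_eq]
  ext i
  fin_cases i <;> rfl

lemma pairingMatrix_mul_transverseFrame {a : Matrix (Fin n) (Fin n) ℝ} (hs : a.IsSymm)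
    (hdet : IsUnit a.det) {b g y : Fin n → ℝ} (h0 : alph a y ≠ 0) :
    pairingMatrix a b g * transverseFrame a b g y =
      transverseGram (quadInv a b b) (quadInv a g g) (quadInv a b g) (sVar a b y) (sVar a g y) := by
  refine ext_of_mulVec_single fun κ => ?_
  have hcol : transverseFrame a b g y *ᵥ Pi.single κ 1 = ![hl a b y, hl a g y] κ := by
    rw [transverseFrame_mulVec]
    fin_cases κ <;> simp
  rw [← mulVec_mulVec, hcol, pairingMatrix_mulVec]
  ext i
  fin_cases κ <;> fin_cases i <;>
    simp [transverseGram, quadInv_hl hs hdet h0, quadInv_comm hs g b, sq, mul_comm]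

/-- The covector `(α/Π)(Ψ_s ᵝs_{j0} + Ψ_s̄ ᵞs_{j0})`. -/
def torsionF (a : (Fin n → ℝ) → Matrix (Fin n) (Fin n) ℝ) (bv gv : (Fin n → ℝ) → Fin n → ℝ)
    (Ψ : ℝ → ℝ → ℝ) (x y : Fin n → ℝ) (j : Fin n) : ℝ :=
  let p := sVar (a x) (bv x) y
  let q := sVar (a x) (gv x) y
  alph (a x) y / PiF Ψ p q * (Ds Ψ p q * s0low a bv x y j + Dt Ψ p q * s0low a gv x y j)

/-- `R^v`, which is `R^β` for `v = b` and `R^γ` for `v = γ`. -/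
def RF (a : (Fin n → ℝ) → Matrix (Fin n) (Fin n) ℝ) (bv gv : (Fin n → ℝ) → Fin n → ℝ)
    (Ψ : ℝ → ℝ → ℝ) (v : (Fin n → ℝ) → Fin n → ℝ) (x y : Fin n → ℝ) : ℝ :=
  let p := sVar (a x) (bv x) y
  let q := sVar (a x) (gv x) y
  r00 a v x y - (2 * alph (a x) y / PiF Ψ p q) *
    (Ds Ψ p q * contrS a bv v x y + Dt Ψ p q * contrS a gv v x y)

/-- `Γ₁`, with `G = g²`, `Θ = θ` as real parameters. -/
def Gamma1F (Ψ : ℝ → ℝ → ℝ) (G Θ p q Rb Rg : ℝ) : ℝ :=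
  (Ds (Ds Ψ) p q + (G - q ^ 2) * JF Ψ p q) * Rb + (Dt (Ds Ψ) p q - (Θ - p * q) * JF Ψ p q) * Rg

/-- `Γ₂`, with `B = b²`, `Θ = θ` as real parameters. -/
def Gamma2F (Ψ : ℝ → ℝ → ℝ) (B Θ p q Rb Rg : ℝ) : ℝ :=
  (Dt (Dt Ψ) p q + (B - p ^ 2) * JF Ψ p q) * Rg + (Dt (Ds Ψ) p q - (Θ - p * q) * JF Ψ p q) * Rb

lemma r00_sub_quadInv_torsionF (w : (Fin n → ℝ) → Fin n → ℝ) :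
    r00 a w x y - quadInv (a x) (w x) ((2 : ℝ) • torsionF a bv gv Ψ x y) = RF a bv gv Ψ w x y := by
  have htorsion : torsionF a bv gv Ψ x y =
      (alph (a x) y / PiF Ψ (sVar (a x) (bv x) y) (sVar (a x) (gv x) y)) •
        (Ds Ψ (sVar (a x) (bv x) y) (sVar (a x) (gv x) y) • s0low a bv x y
          + Dt Ψ (sVar (a x) (bv x) y) (sVar (a x) (gv x) y) • s0low a gv x y) := rfl
  simp only [RF, contrS_eq, htorsion, quadInv_eq, mulVec_smul, mulVec_add, dotProduct_smul,
    dotProduct_add, smul_eq_mul]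
  ring

/-- The adjugate-corrected Hessian `Hess Ψ + J adj N`, where `N` is the Gram matrix of `h` and `h̄`;
it takes `(R^β, R^γ)` to `(Γ₁, Γ₂)`. -/
def correctedHessian (Ψ : ℝ → ℝ → ℝ) (B G Θ p q : ℝ) : Matrix (Fin 2) (Fin 2) ℝ :=
  hessianΨ Ψ p q + JF Ψ p q • (transverseGram B G Θ p q).adjugate

lemma correctedHessian_mulVec (Ψ : ℝ → ℝ → ℝ) (B G Θ p q Rb Rg : ℝ) :
    correctedHessian Ψ B G Θ p q *ᵥ ![Rb, Rg] =
      ![Gamma1F Ψ G Θ p q Rb Rg, Gamma2F Ψ B Θ p q Rb Rg] := by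
  ext i
  fin_cases i <;>
    simp only [correctedHessian, hessianΨ, transverseGram, adjugate_fin_two_of, smul_of, smul_cons,
      smul_eq_mul, Matrix.smul_empty, of_add_of, add_cons, head_cons, tail_cons, empty_add_empty,
      mulVec_cons, mulVec_empty, add_zero, Pi.add_apply, Pi.smul_apply, Function.comp_apply,
      Fin.zero_eta, Fin.mk_one, cons_val_zero, cons_val_one, cons_val_fin_one, Gamma1F, Gamma2F] <;>
    ring

lemma JF_mul_PiF {p q : ℝ} (hPi : PiF Ψ p q ≠ 0) :
    JF Ψ p q * PiF Ψ p q = (hessianΨ Ψ p q).det := by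
  rw [JF, div_mul_cancel₀ _ hPi, hessianΨ, det_fin_two_of, sq]

lemma GammaF_eq (Ψ : ℝ → ℝ → ℝ) (B G Θ p q : ℝ) :
    GammaF Ψ B G Θ p q = PiF Ψ p q + (transverseGram B G Θ p q * hessianΨ Ψ p q).trace
      + (transverseGram B G Θ p q).det * JF Ψ p q := by
  simp only [GammaF, transverseGram, hessianΨ, mul_fin_two, trace_fin_two_of, det_fin_two_of]
  ring

lemma correctedHessian_mul {B G Θ p q : ℝ} (hPi : PiF Ψ p q ≠ 0) :
    correctedHessian Ψ B G Θ p q * (PiF Ψ p q • 1 + transverseGram B G Θ p q * hessianΨ Ψ p q) =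
      GammaF Ψ B G Θ p q • hessianΨ Ψ p q := by
  rw [GammaF_eq]
  exact add_smul_adjugate_mul_smul_one_add _ _ (JF_mul_PiF hPi)

lemma mul_correctedHessian {B G Θ p q : ℝ} (hPi : PiF Ψ p q ≠ 0) :
    (PiF Ψ p q • 1 + hessianΨ Ψ p q * transverseGram B G Θ p q) * correctedHessian Ψ B G Θ p q =
      GammaF Ψ B G Θ p q • hessianΨ Ψ p q := by
  rw [GammaF_eq]
  exact smul_one_add_mul_add_smul_adjugate _ _ (JF_mul_PiF hPi)

lemma rapcsak_Fm (ha : ∀ i j, DifferentiableAt ℝ (fun z => a z i j) x)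
    (hs : ∀ᶠ z in nhds x, (a z).IsSymm) (hdet : IsUnit (a x).det) (h0 : alph (a x) y ≠ 0)
    (hb : ∀ i, DifferentiableAt ℝ (fun z => bv z i) x)
    (hg : ∀ i, DifferentiableAt ℝ (fun z => gv z i) x)
    (hΨ : ContDiffAt ℝ 2 (uncurry Ψ) (sVar (a x) (bv x) y, sVar (a x) (gv x) y))
    (hPi : PiF Ψ (sVar (a x) (bv x) y) (sVar (a x) (gv x) y) ≠ 0) :
    rapcsak (fun z => Fm (a z) (bv z) (gv z) Ψ) x y =
      (PiF Ψ (sVar (a x) (bv x) y) (sVar (a x) (gv x) y) / alph (a x) y) •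
        ((2 : ℝ) • angularG a x y + (2 : ℝ) • torsionF a bv gv Ψ x y
          + (PiF Ψ (sVar (a x) (bv x) y) (sVar (a x) (gv x) y))⁻¹ •
            transverseFrame (a x) (bv x) (gv x) y *ᵥ
              hessianΨ Ψ (sVar (a x) (bv x) y) (sVar (a x) (gv x) y) *ᵥ
                (![r00 a bv x y, r00 a gv x y]
                  + pairingMatrix (a x) (bv x) (gv x) *ᵥ ((2 : ℝ) • angularG a x y))) := by
  ext j
  have hF := rapcsak_mul_comp_div (rapcsakDifferentiable_alph ha hs h0)
    (rapcsakDifferentiable_oneForm hb) (rapcsakDifferentiable_oneForm hg) h0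
    (s := sVar (a x) (bv x) y) (t := sVar (a x) (gv x) y) rfl rfl hΨ
    (fderiv_sVar_base ha hs hdet h0 hb).symm (fderiv_sVar_base ha hs hdet h0 hg).symm j
  refine hF.trans ?_
  have hquad (v w : Fin n → ℝ) : quadInv (a x) v ((2 : ℝ) • w) = 2 * quadInv (a x) v w := by
    simp [quadInv_eq, mulVec_smul]
  rw [rapcsak_alph ha hs hdet h0, rapcsak_oneForm hs hb, rapcsak_oneForm hs hg]
  simp only [transverseFrame_mulVec, pairingMatrix_mulVec, hessianΨ, hquad, pd_oneForm, hl_eq,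
    Pi.smul_apply, Pi.add_apply, Pi.sub_apply, smul_eq_mul, torsionF]
  generalize sVar (a x) (bv x) y = p at hPi ⊢
  generalize sVar (a x) (gv x) y = q at hPi ⊢
  simp only [mulVec_cons, mulVec_empty, add_cons, head_cons, tail_cons, empty_add_empty, add_zero,
    Pi.add_apply, Pi.smul_apply, Function.comp_apply, cons_val_zero, cons_val_one,
    cons_val_fin_one, smul_eq_mul]
  field_simp
  ring

end Metric

section ProjectiveFlatness

open Matrix Function

theorem statement15_general {n : ℕ} {a : (Fin n → ℝ) → Matrix (Fin n) (Fin n) ℝ}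
    {bv gv : (Fin n → ℝ) → Fin n → ℝ} {Ψ : ℝ → ℝ → ℝ} {x y : Fin n → ℝ}
    (ha : ∀ i j, DifferentiableAt ℝ (fun z => a z i j) x)
    (hs : ∀ᶠ z in nhds x, (a z).IsSymm) (hdet : IsUnit (a x).det) (h0 : alph (a x) y ≠ 0)
    (hb : ∀ i, DifferentiableAt ℝ (fun z => bv z i) x)
    (hg : ∀ i, DifferentiableAt ℝ (fun z => gv z i) x)
    {p q B G Θ : ℝ} (hp : p = sVar (a x) (bv x) y) (hq : q = sVar (a x) (gv x) y)
    (hB : B = quadInv (a x) (bv x) (bv x)) (hG : G = quadInv (a x) (gv x) (gv x))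
    (hΘ : Θ = quadInv (a x) (bv x) (gv x)) (hΨ : ContDiffAt ℝ 2 (uncurry Ψ) (p, q))
    (hPi : PiF Ψ p q ≠ 0) (hΓ : GammaF Ψ B G Θ p q ≠ 0) :
    (∀ j, rapcsak (fun z => Fm (a z) (bv z) (gv z) Ψ) x y j = 0) ↔
      ∀ j, angularG a x y j + torsionF a bv gv Ψ x y j + 1 / (2 * GammaF Ψ B G Θ p q) *
        (Gamma1F Ψ G Θ p q (RF a bv gv Ψ bv x y) (RF a bv gv Ψ gv x y) * hl (a x) (bv x) y j
          + Gamma2F Ψ B Θ p q (RF a bv gv Ψ bv x y) (RF a bv gv Ψ gv x y)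
            * hl (a x) (gv x) y j) = 0 := by
  subst hp hq hB hG hΘ
  have hgram := pairingMatrix_mul_transverseFrame hs.self_of_nhds hdet (b := bv x) (g := gv x) h0
  have helim := add_add_inv_smul_mulVec_eq_zero_iff hPi hΓ
    (hgram ▸ correctedHessian_mul hPi) (hgram ▸ mul_correctedHessian hPi)
    ((2 : ℝ) • angularG a x y) ((2 : ℝ) • torsionF a bv gv Ψ x y) ![r00 a bv x y, r00 a gv x y]
  have hR : ![r00 a bv x y, r00 a gv x y] -
      pairingMatrix (a x) (bv x) (gv x) *ᵥ ((2 : ℝ) • torsionF a bv gv Ψ x y) =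
        ![RF a bv gv Ψ bv x y, RF a bv gv Ψ gv x y] := by
    simp [pairingMatrix_mulVec, r00_sub_quadInv_torsionF]
  rw [hR, correctedHessian_mulVec, transverseFrame_mulVec _ _ _ _ ![_, _]] at helim
  have hL := funext_iff (f := rapcsak (fun z => Fm (a z) (bv z) (gv z) Ψ) x y) (g := 0)
  refine hL.symm.trans ?_
  rw [rapcsak_Fm ha hs hdet h0 hb hg hΨ hPi, smul_eq_zero_iff_right (div_ne_zero hPi h0), helim,
    funext_iff]
  refine forall_congr' fun j => ?_
  rw [← mul_eq_zero_iff_left (two_ne_zero' ℝ)]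
  refine Eq.congr_left ?_
  simp only [cons_val_zero, cons_val_one, smul_add, Pi.add_apply, Pi.smul_apply, smul_eq_mul,
    one_div, mul_inv]
  field_simp

lemma contDiffAt_uncurry_sVar {n : ℕ} {a : Matrix (Fin n) (Fin n) ℝ} (ha : a.PosDef)
    {y : Fin n → ℝ} (hy : y ≠ 0) {b g : Fin n → ℝ} {b₀ g₀ : ℝ} (hb : √(quadInv a b b) < b₀)
    (hg : √(quadInv a g g) < g₀) {Ψ : ℝ → ℝ → ℝ} {k : WithTop ℕ∞}
    (hΨ : ContDiffOn ℝ k (uncurry Ψ) (Ioo (-b₀) b₀ ×ˢ Ioo (-g₀) g₀)) :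
    ContDiffAt ℝ k (uncurry Ψ) (sVar a b y, sVar a g y) :=
  hΨ.contDiffAt <| prod_mem_nhds
    (isOpen_Ioo.mem_nhds (abs_lt.1 ((abs_sVar_le ha hy b).trans_lt hb)))
    (isOpen_Ioo.mem_nhds (abs_lt.1 ((abs_sVar_le ha hy g).trans_lt hg)))

end ProjectiveFlatness

/-- characterization of projective flatness of the (α,β,γ)-metric. -/
theorem statement15
    (n : ℕ) (hn : 2 ≤ n)
    (U : Set (Fin n → ℝ)) (hU : IsOpen U)
    (a : (Fin n → ℝ) → Matrix (Fin n) (Fin n) ℝ)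
    (haS : ∀ i j, ContDiffOn ℝ (⊤ : ℕ∞) (fun x => a x i j) U)
    (haP : ∀ x ∈ U, (a x).PosDef)
    (bv gv : (Fin n → ℝ) → Fin n → ℝ)
    (hbS : ∀ i, ContDiffOn ℝ (⊤ : ℕ∞) (fun x => bv x i) U)
    (hgS : ∀ i, ContDiffOn ℝ (⊤ : ℕ∞) (fun x => gv x i) U)
    (b₀ g₀ : ℝ) (hb₀ : 0 < b₀) (hg₀ : 0 < g₀)
    (hb : ∀ x ∈ U, Real.sqrt (quadInv (a x) (bv x) (bv x)) < b₀)
    (hg : ∀ x ∈ U, Real.sqrt (quadInv (a x) (gv x) (gv x)) < g₀)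
    (Ψ : ℝ → ℝ → ℝ)
    (hΨ : ContDiffOn ℝ (⊤ : ℕ∞) (fun p : ℝ × ℝ => Ψ p.1 p.2)
      (Set.Ioo (-b₀) b₀ ×ˢ Set.Ioo (-g₀) g₀))
    (hΨpos : ∀ p ∈ Set.Ioo (-b₀) b₀ ×ˢ Set.Ioo (-g₀) g₀, 0 < Ψ p.1 p.2)
    (hPipos : ∀ x ∈ U, ∀ y : Fin n → ℝ, y ≠ 0 →
      0 < PiF Ψ (sVar (a x) (bv x) y) (sVar (a x) (gv x) y))
    (hΓpos : ∀ x ∈ U, ∀ y : Fin n → ℝ, y ≠ 0 →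
      0 < GammaF Ψ (quadInv (a x) (bv x) (bv x)) (quadInv (a x) (gv x) (gv x))
          (quadInv (a x) (bv x) (gv x)) (sVar (a x) (bv x) y) (sVar (a x) (gv x) y))
 :
    (∀ x ∈ U, ∀ y : Fin n → ℝ, y ≠ 0 → ∀ j : Fin n,
      (∑ k, pd (fun z => pd (Fm (a z) (bv z) (gv z) Ψ) y j) x k * y k)
        - pd (fun z => Fm (a z) (bv z) (gv z) Ψ y) x j = 0)
    ↔
    (∀ x ∈ U, ∀ y : Fin n → ℝ, y ≠ 0 → ∀ j : Fin n,
      ∀ p q Bq Gq Θq Rb Rg : ℝ,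
        p = sVar (a x) (bv x) y → q = sVar (a x) (gv x) y →
        Bq = quadInv (a x) (bv x) (bv x) → Gq = quadInv (a x) (gv x) (gv x) →
        Θq = quadInv (a x) (bv x) (gv x) →
        Rb = r00 a bv x y - (2 * alph (a x) y / PiF Ψ p q) *
            (Ds Ψ p q * contrS a bv bv x y + Dt Ψ p q * contrS a gv bv x y) →
        Rg = r00 a gv x y - (2 * alph (a x) y / PiF Ψ p q) *
            (Ds Ψ p q * contrS a bv gv x y + Dt Ψ p q * contrS a gv gv x y) →
        (∑ i, (a x i j - pd (alph (a x)) y i * pd (alph (a x)) y j) * alphaG a x y i)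
          + (alph (a x) y / PiF Ψ p q) *
              (Ds Ψ p q * s0low a bv x y j + Dt Ψ p q * s0low a gv x y j)
          + (1 / (2 * GammaF Ψ Bq Gq Θq p q)) *
              (((Ds (Ds Ψ) p q + (Gq - q ^ 2) * JF Ψ p q) * Rb
                    + (Dt (Ds Ψ) p q - (Θq - p * q) * JF Ψ p q) * Rg)
                  * hl (a x) (bv x) y j
                + ((Dt (Dt Ψ) p q + (Bq - p ^ 2) * JF Ψ p q) * Rg
                    + (Dt (Ds Ψ) p q - (Θq - p * q) * JF Ψ p q) * Rb)
                  * hl (a x) (gv x) y j) = 0) := by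
  have differentiableAt {f : (Fin n → ℝ) → ℝ} (hf : ContDiffOn ℝ (⊤ : ℕ∞) f U) {x} (hx : x ∈ U) :
      DifferentiableAt ℝ f x := (hf.contDiffAt (hU.mem_nhds hx)).differentiableAt (by simp)
  have isSymm {x} (hx : x ∈ U) : (a x).IsSymm :=
    (Matrix.conjTranspose_eq_transpose_of_trivial _).symm.trans (haP x hx).isHermitian
  refine forall₄_congr fun x hx y hy => (statement15_general
    (fun i j => differentiableAt (haS i j) hx)
    (Filter.mem_of_superset (hU.mem_nhds hx) fun _ => isSymm) (haP x hx).det_pos.ne'.isUnit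
    (alph_pos (haP x hx) hy).ne' (fun i => differentiableAt (hbS i) hx)
    (fun i => differentiableAt (hgS i) hx) rfl rfl rfl rfl rfl
    ((contDiffAt_uncurry_sVar (haP x hx) hy (hb x hx) (hg x hx) hΨ).of_le ENat.LEInfty.out)
    (hPipos x hx y hy).ne' (hΓpos x hx y hy).ne').trans (forall_congr' fun j => ⟨?_, fun h => ?_⟩)
  · rintro h _ _ _ _ _ _ _ rfl rfl rfl rfl rfl rfl rfl
    exact h
  · exact h _ _ _ _ _ _ _ rfl rfl rfl rfl rfl rfl rfl
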